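/- Let G* be the HNN extension of G with associated subgroups A, B via φ: A → B, and let Δ: G* → ℝ be defined from signatures as Δ(g) = Σ_{k≥1} r_k(g). If g ∈ G* is a product of k group-palindromes, g = p₁p₂⋯p_k with k ≥ 1, then Δ(g) ≤ 7k − 6. -/

import Mathlib

/-!
Since `p_k - m_k` and `p_k + m_k` have the same parity, `Δ(g)` is the number of elements of `par s`,
the set of lengths `k` such that the signature `s` of `g` has an odd number of maximal blocks of
length `k`, of either sign.

A group-palindrome has a palindromic signature (`GroupPalindrome.hasSig`): the reversed word has
as many stable letters as the reduced one and represents the same element, so it is reduced as well,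
and Britton's lemma identifies the two signatures. In a palindrome all blocks except the middle one
occur in mirror pairs, so `Δ ≤ 1` (`card_par_palindrome`).

For a product, cancellation gives signatures `u w` and `w⁻¹ v` of the factors and `u v` of the
product (`HasSig.mul`). Up to symmetric difference `par` is additive on concatenations, except that
the merging of blocks of lengths `i` and `j` at the junction changes it by the lengths `i`, `j`,
`i + j`; moreover `par w⁻¹ = par w`. The three junctions `u|w`, `w⁻¹|v`, `u|v` cannot all merge, as
the signs would contradict each other. Hence `Δ(xy) ≤ Δ(x) + Δ(y) + 6` (`card_par_append_le`), and
`k` palindromes give `k + 6(k - 1) = 7k - 6`.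
-/

open HNNExtension

open scoped Classical

namespace PalHNN

variable {G : Type*} [Group G] (A B : Subgroup G) (φ : A ≃* B)

/-- The HNN extension `⟨G, t | t⁻¹ a t = φ a, a ∈ A⟩`.  In Mathlib's `HNNExtension G X Y ψ`
the defining relation is `t x t⁻¹ = ψ x` for `x ∈ X`, so the paper's group is
`HNNExtension G B A φ.symm`. -/
abbrev HNN := HNNExtension G B A φ.symm

/-- The element `g₀ t^{ε₁} g₁ ⋯ t^{εₙ} gₙ` of the HNN extension determined by a head `g₀`
and a list of pairs `(εᵢ, gᵢ)`. -/
def wordProd (g0 : G) (l : List (ℤˣ × G)) : HNN A B φ :=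
  of g0 * (l.map fun p => t ^ (p.1 : ℤ) * of p.2).prod

/-- The product `gₙ t^{εₙ} g_{n-1} t^{ε_{n-1}} ⋯ g₁ t^{ε₁} g₀` of the reverse of the word
`g₀ t^{ε₁} g₁ ⋯ t^{εₙ} gₙ`. -/
def revProd (g0 : G) (l : List (ℤˣ × G)) : HNN A B φ :=
  (l.reverse.map fun p => of p.2 * t ^ (p.1 : ℤ)).prod * of g0

/-- A word `g₀ t^{ε₁} g₁ ⋯ t^{εₙ} gₙ` is reduced iff it contains no subword `t⁻¹ gᵢ t` with
`gᵢ ∈ A` and no subword `t gᵢ t⁻¹` with `gᵢ ∈ B`. -/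
def HNNReduced (l : List (ℤˣ × G)) : Prop :=
  List.Chain' (fun p q => ¬(p.1 = -1 ∧ p.2 ∈ A ∧ q.1 = 1) ∧ ¬(p.1 = 1 ∧ p.2 ∈ B ∧ q.1 = -1)) l

/-- An element of the HNN extension is a group-palindrome if it has a reduced expression
`g₀ t^{ε₁} g₁ ⋯ t^{εₙ} gₙ` whose reverse `gₙ t^{εₙ} g_{n-1} ⋯ g₁ t^{ε₁} g₀` represents the
same element. -/
def GroupPalindrome (x : HNN A B φ) : Prop :=
  ∃ (g0 : G) (l : List (ℤˣ × G)),
    HNNReduced A B l ∧ wordProd A B φ g0 l = x ∧ revProd A B φ g0 l = x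

/-- The signature `(ε₁, …, εₙ)` of an element, read off from a chosen reduced expression. -/
noncomputable def sqn (x : HNN A B φ) : List ℤˣ :=
  if h : ∃ p : G × List (ℤˣ × G), HNNReduced A B p.2 ∧ wordProd A B φ p.1 p.2 = x then
    (Classical.choose h).2.map Prod.fst
  else []

/-- The number of maximal blocks of consecutive `v`'s of length exactly `k` in the list `s`. -/
noncomputable def blockCount (v : ℤˣ) (k : ℕ) (s : List ℤˣ) : ℕ :=
  ((Finset.range (s.length + 1)).filter fun i => ∃ pre post : List ℤˣ,
    s = pre ++ List.replicate k v ++ post ∧ pre.length = i ∧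
      pre.getLast? ≠ some v ∧ post.head? ≠ some v).card

/-- `p_k`: the number of maximal blocks of `+1`'s of length `k` in the signature. -/
noncomputable def pk (k : ℕ) (x : HNN A B φ) : ℕ := blockCount 1 k (sqn A B φ x)

/-- `m_k`: the number of maximal blocks of `-1`'s of length `k` in the signature. -/
noncomputable def mk (k : ℕ) (x : HNN A B φ) : ℕ := blockCount (-1) k (sqn A B φ x)

/-- `d_k = p_k - m_k`. -/
noncomputable def dk (k : ℕ) (x : HNN A B φ) : ℤ := (pk A B φ k x : ℤ) - (mk A B φ k x : ℤ)

/-- `r_k ∈ {0,1}`: the remainder of `d_k` modulo 2. -/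
noncomputable def rk (k : ℕ) (x : HNN A B φ) : ℤ := dk A B φ k x % 2

/-- The quasi-homomorphism `Δ(g) = Σ_{k ≥ 1} r_k(g)` (the sum is finite since `r_k = 0` for
`k` larger than the length of the signature). -/
noncomputable def Delta (x : HNN A B φ) : ℝ :=
  ∑ k ∈ Finset.Icc 1 (sqn A B φ x).length, (rk A B φ k x : ℝ)

/-! ### Blocks of a sign sequence -/

/-- Entrywise description of a maximal block of `v`'s of length `k` starting at index `i`. -/
theorem block_iff (v : ℤˣ) (k : ℕ) (hk : 1 ≤ k) (s : List ℤˣ) (i : ℕ) :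
    (∃ pre post : List ℤˣ, s = pre ++ List.replicate k v ++ post ∧ pre.length = i ∧
      pre.getLast? ≠ some v ∧ post.head? ≠ some v) ↔
    (∀ j < k, s[i + j]? = some v) ∧ s[i + k]? ≠ some v ∧ (i = 0 ∨ s[i - 1]? ≠ some v) := by
  constructor
  · rintro ⟨pre, post, rfl, rfl, h1, h2⟩
    refine ⟨fun j hj => ?_, ?_, ?_⟩
    · grind
    · rw [List.head?_eq_getElem?] at h2
      grind
    · rw [List.getLast?_eq_getElem?] at h1
      grind
  · rintro ⟨h1, h2, h3⟩
    have hlen : i + k ≤ s.length := by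
      have := h1 (k - 1) (by omega)
      grind
    have hmid : (s.drop i).take k = List.replicate k v := by
      apply List.ext_getElem?
      intro j
      by_cases hj : j < k
      · have := h1 j hj
        grind
      · grind
    refine ⟨s.take i, s.drop (i + k), ?_, ?_, ?_, ?_⟩
    · rw [← hmid, List.append_assoc, ← List.drop_drop, List.take_append_drop,
        List.take_append_drop]
    · grind
    · rw [List.getLast?_eq_getElem?]
      grind
    · rw [List.head?_eq_getElem?]
      grind

/-- The starting indices of the maximal blocks of `v`'s of length `k`. -/
noncomputable def blockSet (v : ℤˣ) (k : ℕ) (s : List ℤˣ) : Finset ℕ :=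
  (Finset.range (s.length + 1)).filter fun i =>
    (∀ j < k, s[i + j]? = some v) ∧ s[i + k]? ≠ some v ∧ (i = 0 ∨ s[i - 1]? ≠ some v)

theorem blockCount_eq (v : ℤˣ) (k : ℕ) (hk : 1 ≤ k) (s : List ℤˣ) :
    blockCount v k s = (blockSet v k s).card := by
  unfold blockCount blockSet
  simp only [block_iff v k hk]

theorem mem_blockSet {v : ℤˣ} {k : ℕ} (hk : 1 ≤ k) {s : List ℤˣ} {i : ℕ} :
    i ∈ blockSet v k s ↔
      (∀ j < k, s[i + j]? = some v) ∧ s[i + k]? ≠ some v ∧ (i = 0 ∨ s[i - 1]? ≠ some v) := by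
  simp only [blockSet, Finset.mem_filter, Finset.mem_range, and_iff_right_iff_imp]
  rintro ⟨h, -⟩
  have := h 0 (by omega)
  grind

/-- Two sign sequences do not interact when concatenated: no block of the first continues
into the second. -/
def Separated (a b : List ℤˣ) : Prop := ∀ v, a.getLast? = some v → b.head? ≠ some v

theorem blockCount_append (v : ℤˣ) (k : ℕ) (hk : 1 ≤ k) (a b : List ℤˣ) (h : Separated a b) :
    blockCount v k (a ++ b) = blockCount v k a + blockCount v k b := by
  have hsep := h v
  rw [List.getLast?_eq_getElem?, List.head?_eq_getElem?] at hsep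
  simp only [blockCount_eq v k hk]
  have key : blockSet v k (a ++ b) =
      blockSet v k a ∪ (blockSet v k b).map (addRightEmbedding a.length) := by
    ext i
    simp only [Finset.mem_union, Finset.mem_map, addRightEmbedding_apply, mem_blockSet hk]
    constructor
    · rintro ⟨h1, h2, h3⟩
      by_cases hi : i < a.length
      · left
        have hik : i + k ≤ a.length := by
          by_contra hcon
          have e1 := h1 (a.length - 1 - i) (by omega)
          have e2 := h1 (a.length - i) (by omega)
          grind
        refine ⟨fun j hj => ?_, ?_, ?_⟩
        · have := h1 j hj
          grind
        · grind
        · grind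
      · right
        obtain ⟨i, rfl⟩ : ∃ i', i = i' + a.length := ⟨i - a.length, by omega⟩
        have shift : ∀ j, (a ++ b)[i + a.length + j]? = b[i + j]? := fun j => by
          rw [List.getElem?_append_right (by omega)]
          congr 1
          omega
        refine ⟨i, ⟨fun j hj => ?_, ?_, ?_⟩, rfl⟩
        · rw [← shift, h1 j hj]
        · rwa [← shift]
        · grind
    · rintro (⟨h1, h2, h3⟩ | ⟨i, ⟨h1, h2, h3⟩, rfl⟩)
      · have e1 := h1 (k - 1) (by omega)
        have hik : i + k ≤ a.length := by grind
        refine ⟨fun j hj => ?_, ?_, ?_⟩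
        · have := h1 j hj
          grind
        · by_cases hik' : i + k = a.length
          · have : i + (k - 1) = a.length - 1 := by omega
            grind
          · grind
        · grind
      · have e1 := h1 0 (by omega)
        refine ⟨fun j hj => ?_, ?_, ?_⟩
        · have := h1 j hj
          grind
        · grind
        · by_cases hi : i = 0
          · subst hi
            by_cases ha : a.length = 0
            · left; omega
            · right
              grind
          · grind
  rw [key, Finset.card_union_of_disjoint, Finset.card_map]
  rw [Finset.disjoint_left]
  intro i hi hi'
  simp only [Finset.mem_map, addRightEmbedding_apply, mem_blockSet hk] at hi hi'
  obtain ⟨i', -, rfl⟩ := hi'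
  have := hi.1 0 (by omega)
  grind

theorem blockCount_replicate (w : ℤˣ) (k : ℕ) (hk : 1 ≤ k) (m : ℕ) (v : ℤˣ) :
    blockCount w k (List.replicate m v) = if w = v ∧ k = m then 1 else 0 := by
  rw [blockCount_eq w k hk]
  split_ifs with h
  · obtain ⟨rfl, rfl⟩ := h
    rw [Finset.card_eq_one]
    refine ⟨0, ?_⟩
    ext i
    rw [mem_blockSet hk, Finset.mem_singleton]
    constructor
    · rintro ⟨h1, h2, h3⟩
      have := h1 (k - 1) (by omega)
      grind
    · rintro rfl
      grind
  · rw [Finset.card_eq_zero, Finset.eq_empty_iff_forall_notMem]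
    intro i
    rw [mem_blockSet hk]
    rintro ⟨h1, h2, h3⟩
    have e1 := h1 0 (by omega)
    have e2 := h1 (k - 1) (by omega)
    grind

theorem blockCount_nil (w : ℤˣ) (k : ℕ) (hk : 1 ≤ k) : blockCount w k [] = 0 := by
  have := blockCount_replicate w k hk 0 w
  rw [List.replicate_zero] at this
  rw [this, if_neg (by omega)]

theorem blockCount_eq_zero (w : ℤˣ) (k : ℕ) (hk : 1 ≤ k) (s : List ℤˣ) (h : s.length < k) :
    blockCount w k s = 0 := by
  rw [blockCount_eq w k hk, Finset.card_eq_zero, Finset.eq_empty_iff_forall_notMem]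
  intro i
  rw [mem_blockSet hk]
  rintro ⟨h1, -, -⟩
  have := h1 (k - 1) (by omega)
  grind

/-! ### The set of block lengths occurring an odd number of times -/

/-- The lengths `k ≥ 1` for which the total number of maximal blocks of length `k`, of either
sign, is odd. These are the `k` with `r_k = 1`. -/
noncomputable def par (s : List ℤˣ) : Finset ℕ :=
  (Finset.Icc 1 s.length).filter fun k => Odd (blockCount 1 k s + blockCount (-1) k s)

theorem mem_par {s : List ℤˣ} {k : ℕ} :
    k ∈ par s ↔ 1 ≤ k ∧ Odd (blockCount 1 k s + blockCount (-1) k s) := by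
  simp only [par, Finset.mem_filter, Finset.mem_Icc]
  refine ⟨fun h => ⟨h.1.1, h.2⟩, fun h => ⟨⟨h.1, ?_⟩, h.2⟩⟩
  by_contra hlt
  have h2 := h.2
  rw [blockCount_eq_zero _ _ h.1 _ (by omega), blockCount_eq_zero _ _ h.1 _ (by omega)] at h2
  simp at h2

theorem par_nil : par [] = ∅ := rfl

theorem par_append {a b : List ℤˣ} (h : Separated a b) :
    par (a ++ b) = symmDiff (par a) (par b) := by
  ext k
  simp only [Finset.mem_symmDiff, mem_par]
  by_cases hk : 1 ≤ k
  · simp only [blockCount_append _ k hk a b h, hk, true_and, Nat.odd_iff]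
    omega
  · simp [hk]

theorem par_replicate {m : ℕ} (hm : 1 ≤ m) (v : ℤˣ) : par (List.replicate m v) = {m} := by
  ext k
  rw [mem_par, Finset.mem_singleton]
  constructor
  · rintro ⟨hk, h⟩
    by_contra hne
    simp [blockCount_replicate _ k hk, hne] at h
  · rintro rfl
    refine ⟨hm, ?_⟩
    rcases Int.units_eq_one_or v with rfl | rfl <;> simp [blockCount_replicate _ k hm]

theorem exists_first_block (s : List ℤˣ) (hs : s ≠ []) :
    ∃ (m : ℕ) (v : ℤˣ) (s' : List ℤˣ), 1 ≤ m ∧ s.head? = some v ∧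
      s = List.replicate m v ++ s' ∧ s'.head? ≠ some v := by
  induction s with
  | nil => exact absurd rfl hs
  | cons x l ih =>
    by_cases hl : l = []
    · exact ⟨1, x, [], le_rfl, rfl, by simp [hl], by simp⟩
    · obtain ⟨m, v, s', hm, -, rfl, h2⟩ := ih hl
      by_cases hx : x = v
      · subst hx
        exact ⟨m + 1, x, s', by omega, rfl, by simp [List.replicate_succ], h2⟩
      · refine ⟨1, x, List.replicate m v ++ s', le_rfl, rfl, by simp, ?_⟩
        obtain ⟨m, rfl⟩ : ∃ n, m = n + 1 := ⟨m - 1, by omega⟩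
        simp [List.replicate_succ, Ne.symm hx]

theorem exists_last_block (s : List ℤˣ) (hs : s ≠ []) :
    ∃ (m : ℕ) (v : ℤˣ) (s' : List ℤˣ), 1 ≤ m ∧ s.getLast? = some v ∧
      s = s' ++ List.replicate m v ∧ s'.getLast? ≠ some v := by
  obtain ⟨m, v, s', hm, h0, h1, h2⟩ := exists_first_block s.reverse (by simpa using hs)
  refine ⟨m, v, s'.reverse, hm, by simpa using h0, ?_, by simpa using h2⟩
  rw [← List.reverse_reverse s, h1]
  simp

theorem separated_replicate_left {m : ℕ} {v : ℤˣ} {s : List ℤˣ} (h : s.head? ≠ some v) :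
    Separated (List.replicate m v) s := by
  intro w hw
  rw [List.getLast?_replicate] at hw
  grind

theorem separated_replicate_right {m : ℕ} {v : ℤˣ} {s : List ℤˣ} (h : s.getLast? ≠ some v) :
    Separated s (List.replicate m v) := by
  intro w hw
  rw [List.head?_replicate]
  grind

theorem par_reverse (s : List ℤˣ) : par s.reverse = par s := by
  induction hn : s.length using Nat.strong_induction_on generalizing s with
  | _ n ih =>
    by_cases hs : s = []
    · subst hs; rfl
    obtain ⟨m, v, s', hm, -, rfl, h2⟩ := exists_first_block s hs
    rw [par_append (separated_replicate_left h2), List.reverse_append, List.reverse_replicate,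
      par_append (separated_replicate_right (by simpa using h2)),
      ih s'.length (by simp at hn; omega) s' rfl, symmDiff_comm]

theorem par_map_neg (s : List ℤˣ) : par (s.map (- ·)) = par s := by
  induction hn : s.length using Nat.strong_induction_on generalizing s with
  | _ n ih =>
    by_cases hs : s = []
    · subst hs; rfl
    obtain ⟨m, v, s', hm, -, rfl, h2⟩ := exists_first_block s hs
    have h3 : (s'.map (- ·)).head? ≠ some (-v) := by
      rw [List.head?_map]
      cases h : s'.head? with
      | none => simp
      | some w => rw [h] at h2; simpa using h2
    rw [par_append (separated_replicate_left h2), List.map_append, List.map_replicate,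
      par_append (separated_replicate_left h3),
      ih s'.length (by simp at hn; omega) s' rfl, par_replicate hm, par_replicate hm]

/-- The signature of the inverse of an element of signature `s`. -/
def invSig (s : List ℤˣ) : List ℤˣ := (s.map (- ·)).reverse

theorem par_invSig (s : List ℤˣ) : par (invSig s) = par s := by
  rw [invSig, par_reverse, par_map_neg]

/-! ### Palindromes and concatenation -/

/-- A nonempty palindrome has a middle block, surrounded by mirror images. -/
theorem exists_middle_block {s : List ℤˣ} (h : s.Palindrome) (hs : s ≠ []) :
    ∃ (a : List ℤˣ) (m : ℕ) (v : ℤˣ), 1 ≤ m ∧ s = a ++ List.replicate m v ++ a.reverse ∧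
      a.getLast? ≠ some v := by
  induction h with
  | nil => exact absurd rfl hs
  | singleton x => exact ⟨[], 1, x, le_rfl, by simp, by simp⟩
  | @cons_concat x l _ ih =>
    by_cases hl : l = []
    · exact ⟨[], 2, x, by omega, by simp [hl, List.replicate_succ], by simp⟩
    · obtain ⟨a, m, v, hm, rfl, h2⟩ := ih hl
      by_cases ha : a = []
      · subst ha
        by_cases hx : x = v
        · subst hx
          refine ⟨[], m + 2, x, by omega, ?_, by simp⟩
          rw [show m + 2 = (m + 1) + 1 from rfl, List.replicate_succ, List.replicate_succ']
          simp
        · exact ⟨[x], m, v, hm, by simp, by simpa using hx⟩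
      · refine ⟨x :: a, m, v, hm, by simp, ?_⟩
        rwa [List.getLast?_cons_of_ne_nil ha]

/-- In a palindrome all blocks but the middle one come in mirror pairs of equal length. -/
theorem card_par_palindrome {s : List ℤˣ} (h : s.reverse = s) : (par s).card ≤ 1 := by
  by_cases hs : s = []
  · subst hs; simp [par_nil]
  obtain ⟨a, m, v, hm, rfl, h2⟩ := exists_middle_block (List.Palindrome.of_reverse_eq h) hs
  have h3 : Separated (a ++ List.replicate m v) a.reverse := by
    intro w hw
    rw [List.getLast?_append_of_ne_nil _ (by simp; omega), List.getLast?_replicate] at hw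
    rw [List.head?_reverse]
    grind
  rw [par_append h3, par_append (separated_replicate_right h2), par_reverse, par_replicate hm,
    symmDiff_comm, symmDiff_symmDiff_cancel_left]
  simp

/-- The failure of additivity of `par` under concatenation. -/
noncomputable def defect (a b : List ℤˣ) : Finset ℕ :=
  symmDiff (par (a ++ b)) (symmDiff (par a) (par b))

theorem defect_of_separated {a b : List ℤˣ} (h : Separated a b) : defect a b = ∅ := by
  rw [defect, par_append h, symmDiff_self, Finset.bot_eq_empty]

theorem card_symmDiff_le (a b : Finset ℕ) : (symmDiff a b).card ≤ a.card + b.card :=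
  (Finset.card_le_card (symmDiff_le_sup (a := a) (b := b))).trans (Finset.card_union_le a b)

/-- If a block of length `i` merges with one of length `j`, only the counts of blocks of lengths
`i`, `j` and `i + j` change. -/
theorem card_defect_le (a b : List ℤˣ) : (defect a b).card ≤ 3 := by
  by_cases h : Separated a b
  · simp [defect_of_separated h]
  obtain ⟨v, ha, hb⟩ : ∃ v, a.getLast? = some v ∧ b.head? = some v := by
    unfold Separated at h
    push Not at h
    exact h
  obtain ⟨i, v', a', hi, hv', rfl, ha'⟩ := exists_last_block a (by rintro rfl; simp at ha)
  obtain ⟨j, v'', b', hj, hv'', rfl, hb'⟩ := exists_first_block b (by rintro rfl; simp at hb)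
  obtain rfl : v' = v := Option.some.inj (hv'.symm.trans ha)
  obtain rfl : v'' = v' := Option.some.inj (hv''.symm.trans hb)
  have h3 : Separated (a' ++ List.replicate (i + j) v'') b' := by
    intro w hw
    rw [List.getLast?_append_of_ne_nil _ (by simp; omega), List.getLast?_replicate] at hw
    grind
  have e : a' ++ List.replicate i v'' ++ (List.replicate j v'' ++ b') =
      a' ++ List.replicate (i + j) v'' ++ b' := by
    simp only [List.replicate_add, List.append_assoc]
  have key : defect (a' ++ List.replicate i v'') (List.replicate j v'' ++ b') =
      symmDiff {i + j} (symmDiff {i} {j}) := by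
    rw [defect, e, par_append h3, par_append (separated_replicate_right ha'),
      par_append (separated_replicate_right ha'), par_append (separated_replicate_left hb'),
      par_replicate hi, par_replicate hj, par_replicate (by omega)]
    ext x
    simp only [Finset.mem_symmDiff]
    generalize (x ∈ ({i + j} : Finset ℕ)) = P
    generalize (x ∈ ({i} : Finset ℕ)) = Q
    generalize (x ∈ ({j} : Finset ℕ)) = R
    by_cases h1 : x ∈ par a' <;> by_cases h2 : x ∈ par b' <;> by_cases h3 : P <;>
      by_cases h4 : Q <;> by_cases h5 : R <;> simp [h1, h2, h3, h4, h5]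
  rw [key]
  have h1 := card_symmDiff_le {i + j} (symmDiff {i} {j})
  have h2 := card_symmDiff_le {i} {j}
  simp only [Finset.card_singleton] at h1 h2
  omega

/-- At most two of the three junctions `u|w`, `w⁻¹|v`, `u|v` merge blocks: if all three did, the
first sign of `w` would equal its own negative. -/
theorem card_par_append_le (u w v : List ℤˣ) :
    (par (u ++ v)).card ≤ (par (u ++ w)).card + (par (invSig w ++ v)).card + 6 := by
  have key : par (u ++ v) = symmDiff (symmDiff (par (u ++ w)) (par (invSig w ++ v)))
      (symmDiff (defect u v) (symmDiff (defect u w) (defect (invSig w) v))) := by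
    ext x
    simp only [defect, par_invSig, Finset.mem_symmDiff]
    by_cases h1 : x ∈ par u <;> by_cases h2 : x ∈ par v <;> by_cases h3 : x ∈ par w <;>
      by_cases h4 : x ∈ par (u ++ w) <;> by_cases h5 : x ∈ par (invSig w ++ v) <;>
      simp [h1, h2, h3, h4, h5]
  have hsep : Separated u v ∨ Separated u w ∨ Separated (invSig w) v := by
    by_contra hcon
    simp only [Separated, not_or, not_forall, not_not] at hcon
    obtain ⟨⟨x, hx1, hx2⟩, ⟨y, hy1, hy2⟩, ⟨z, hz1, hz2⟩⟩ := hcon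
    rw [invSig, List.getLast?_reverse, List.head?_map, hy2] at hz1
    rw [hx1] at hy1
    rw [hx2] at hz2
    simp only [Option.some.injEq, Option.map_some] at hy1 hz1 hz2
    subst hy1 hz2
    simp at hz1
  have c1 := card_defect_le u v
  have c2 := card_defect_le u w
  have c3 := card_defect_le (invSig w) v
  have hzero : (defect u v).card + (defect u w).card + (defect (invSig w) v).card ≤ 6 := by
    rcases hsep with h | h | h
    all_goals
      have := congrArg Finset.card (defect_of_separated h)
      rw [Finset.card_empty] at this
      omega
  rw [key]
  have d1 := card_symmDiff_le (symmDiff (par (u ++ w)) (par (invSig w ++ v)))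
    (symmDiff (defect u v) (symmDiff (defect u w) (defect (invSig w) v)))
  have d2 := card_symmDiff_le (par (u ++ w)) (par (invSig w ++ v))
  have d3 := card_symmDiff_le (defect u v) (symmDiff (defect u w) (defect (invSig w) v))
  have d4 := card_symmDiff_le (defect u w) (defect (invSig w) v)
  omega

/-! ### Signatures in the HNN extension -/

/-- Reducedness in the form used by Mathlib's `ReducedWord`. -/
theorem HNNReduced_iff (l : List (ℤˣ × G)) : HNNReduced A B l ↔
    l.IsChain (fun p q => p.2 ∈ toSubgroup B A p.1 → p.1 = q.1) := by
  have : (fun p q : ℤˣ × G =>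
      ¬(p.1 = -1 ∧ p.2 ∈ A ∧ q.1 = 1) ∧ ¬(p.1 = 1 ∧ p.2 ∈ B ∧ q.1 = -1)) =
      (fun p q => p.2 ∈ toSubgroup B A p.1 → p.1 = q.1) := by
    funext ⟨e, g⟩ ⟨f, h⟩
    rcases Int.units_eq_one_or e with rfl | rfl <;> rcases Int.units_eq_one_or f with rfl | rfl <;>
      simp
  unfold HNNReduced List.Chain'
  rw [this]

/-- `x` has a reduced expression with signature `s`. -/
def HasSig (x : HNN A B φ) (s : List ℤˣ) : Prop :=
  ∃ (g0 : G) (l : List (ℤˣ × G)), HNNReduced A B l ∧ wordProd A B φ g0 l = x ∧ l.map Prod.fst = s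

/-- Britton's lemma: the signature does not depend on the reduced expression. -/
theorem HasSig.unique {x : HNN A B φ} {s s' : List ℤˣ} (h : HasSig A B φ x s)
    (h' : HasSig A B φ x s') : s = s' := by
  obtain ⟨g0, l, hl, hx, rfl⟩ := h
  obtain ⟨g0', l', hl', hx', rfl⟩ := h'
  exact (ReducedWord.map_fst_eq_and_of_prod_eq φ.symm
    (w₁ := ⟨g0, l, (HNNReduced_iff A B l).1 hl⟩) (w₂ := ⟨g0', l', (HNNReduced_iff A B l').1 hl'⟩)
    (hx.trans hx'.symm)).1

theorem HasSig.sqn_eq {x : HNN A B φ} {s : List ℤˣ} (h : HasSig A B φ x s) :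
    sqn A B φ x = s := by
  have hex : ∃ p : G × List (ℤˣ × G), HNNReduced A B p.2 ∧ wordProd A B φ p.1 p.2 = x := by
    obtain ⟨g0, l, hl, hx, -⟩ := h
    exact ⟨(g0, l), hl, hx⟩
  rw [sqn, dif_pos hex]
  exact HasSig.unique A B φ
    ⟨_, _, (Classical.choose_spec hex).1, (Classical.choose_spec hex).2, rfl⟩ h

theorem wordProd_nil (g : G) : wordProd A B φ g [] = of g := by simp [wordProd]

theorem wordProd_append (g : G) (l l' : List (ℤˣ × G)) :
    wordProd A B φ g (l ++ l') = wordProd A B φ g l * wordProd A B φ 1 l' := by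
  simp [wordProd, mul_assoc]

theorem wordProd_cons (g : G) (p : ℤˣ × G) (l : List (ℤˣ × G)) :
    wordProd A B φ g (p :: l) = of g * t ^ (p.1 : ℤ) * wordProd A B φ p.2 l := by
  simp [wordProd, mul_assoc]

theorem of_mul_wordProd (g h : G) (l : List (ℤˣ × G)) :
    of g * wordProd A B φ h l = wordProd A B φ (g * h) l := by
  simp [wordProd, mul_assoc]

/-- The defining relation, for both signs of the exponent. -/
theorem pinch (e : ℤˣ) (g : G) (hg : g ∈ toSubgroup B A e) :
    ∃ g' : G, (t ^ (e : ℤ) * of g * t ^ ((-e : ℤˣ) : ℤ) : HNN A B φ) = of g' := by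
  rcases Int.units_eq_one_or e with rfl | rfl
  · exact ⟨_, by simpa using (equiv_eq_conj (φ := φ.symm) ⟨g, hg⟩).symm⟩
  · exact ⟨_, by simpa using (equiv_symm_eq_conj (φ := φ.symm) ⟨g, hg⟩).symm⟩

/-- Multiplying two reduced words cancels a suffix of the first signature against the beginning
of the second one, and what is left over is reduced. -/
theorem HasSig.mul {x y : HNN A B φ} {s s' : List ℤˣ} (hx : HasSig A B φ x s)
    (hy : HasSig A B φ y s') : ∃ u w v, s = u ++ w ∧ s' = invSig w ++ v ∧
      HasSig A B φ (x * y) (u ++ v) := by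
  obtain ⟨g0, l, hl, rfl, rfl⟩ := hx
  obtain ⟨h0, l', hl', rfl, rfl⟩ := hy
  induction l' generalizing l h0 with
  | nil =>
    refine ⟨l.map Prod.fst, [], [], by simp, by simp [invSig], ?_⟩
    rcases List.eq_nil_or_concat l with rfl | ⟨l1, ⟨e, g⟩, rfl⟩
    · exact ⟨g0 * h0, [], hl, by simp [wordProd], rfl⟩
    · refine ⟨g0, l1 ++ [(e, g * h0)], ?_, by simp [wordProd, mul_assoc], by simp⟩
      rw [HNNReduced_iff, List.concat_eq_append, List.isChain_append] at hl
      rw [HNNReduced_iff, List.isChain_append]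
      simpa using hl
  | cons p l' ih =>
    obtain ⟨f, h⟩ := p
    rcases List.eq_nil_or_concat l with rfl | ⟨l1, ⟨e, g⟩, rfl⟩
    · exact ⟨[], [], f :: l'.map Prod.fst, by simp, by simp [invSig],
        g0 * h0, (f, h) :: l', hl', by simp [wordProd, mul_assoc], rfl⟩
    rw [List.concat_eq_append] at hl ⊢
    have hl1 := (List.isChain_append.1 ((HNNReduced_iff A B _).1 hl))
    have hl2 := (List.isChain_cons.1 ((HNNReduced_iff A B _).1 hl'))
    by_cases hc : g * h0 ∈ toSubgroup B A e ∧ e ≠ f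
    · obtain ⟨hg, hef⟩ := hc
      obtain rfl : f = -e := by
        rcases Int.units_eq_one_or e with rfl | rfl <;>
          rcases Int.units_eq_one_or f with rfl | rfl <;> simp_all
      obtain ⟨g', hg'⟩ := pinch A B φ e _ hg
      obtain ⟨u, w, v, h1, h2, h3⟩ := ih l1 ((HNNReduced_iff A B _).2 hl1.1) (g' * h)
        ((HNNReduced_iff A B _).2 hl2.2)
      refine ⟨u, w ++ [e], v, by simp [h1], by simp [h2, invSig], ?_⟩
      convert h3 using 1
      rw [← of_mul_wordProd, ← hg', wordProd_append, wordProd_cons, wordProd_cons, wordProd_nil]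
      simp [mul_assoc]
    · refine ⟨(l1 ++ [(e, g)]).map Prod.fst, [], f :: l'.map Prod.fst, by simp, by simp [invSig],
        g0, l1 ++ (e, g * h0) :: (f, h) :: l', ?_, ?_, by simp⟩
      · rw [HNNReduced_iff, List.isChain_append, List.isChain_cons]
        refine ⟨hl1.1, ⟨?_, (HNNReduced_iff A B _).1 hl'⟩, ?_⟩
        · simpa [Classical.not_imp] using hc
        · simpa using hl1.2.2
      · simp [wordProd, mul_assoc]

theorem hasSig_letter (g : G) (e : ℤˣ) : HasSig A B φ (of g * t ^ (e : ℤ)) [e] :=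
  ⟨g, [(e, 1)], (HNNReduced_iff A B _).2 (List.isChain_singleton _), by simp [wordProd], rfl⟩

/-- A word either has the same signature as its reduced form, or its reduced form is shorter. -/
theorem exists_hasSig (g0 : G) (l : List (ℤˣ × G)) :
    ∃ s, HasSig A B φ (wordProd A B φ g0 l) s ∧ (s.length < l.length ∨ s = l.map Prod.fst) := by
  induction l generalizing g0 with
  | nil => exact ⟨[], ⟨g0, [], (HNNReduced_iff A B _).2 List.isChain_nil, rfl, rfl⟩, Or.inr rfl⟩
  | cons p l ih =>
    obtain ⟨s, hs, hlen⟩ := ih p.2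
    obtain ⟨u, w, v, h1, h2, h3⟩ := (hasSig_letter A B φ g0 p.1).mul A B φ hs
    rw [← wordProd_cons] at h3
    refine ⟨u ++ v, h3, ?_⟩
    have e1 := congrArg List.length h1
    have e2 := congrArg List.length h2
    simp only [invSig, List.length_append, List.length_reverse, List.length_map,
      List.length_cons, List.length_nil] at e1 e2
    by_cases hw : w = []
    · subst hw
      simp only [List.append_nil, invSig, List.map_nil, List.reverse_nil, List.nil_append] at h1 h2
      subst h1 h2
      rcases hlen with hlen | hlen
      · left; simpa using hlen
      · right; simp [hlen]
    · left
      have := List.length_pos_iff.2 hw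
      have hle : s.length ≤ l.length := by
        rcases hlen with hlen | hlen
        · exact hlen.le
        · simp [hlen]
      simp only [List.length_append, List.length_cons]
      omega

/-- The reverse of a word is again a word, whose signs are read backwards. -/
theorem revProd_eq_wordProd (g0 : G) (l : List (ℤˣ × G)) : ∃ (g0' : G) (l' : List (ℤˣ × G)),
    revProd A B φ g0 l = wordProd A B φ g0' l' ∧ l'.map Prod.fst = (l.map Prod.fst).reverse := by
  induction l generalizing g0 with
  | nil => exact ⟨g0, [], by simp [revProd, wordProd], rfl⟩
  | cons p l ih =>
    obtain ⟨g0', l', h1, h2⟩ := ih p.2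
    refine ⟨g0', l' ++ [(p.1, g0)], ?_, by simp [h2]⟩
    rw [wordProd_append, ← h1]
    simp [revProd, wordProd, mul_assoc]

/-- The reverse of a reduced word of a group-palindrome represents an element of the same length,
so it cannot be shortened; hence the signature is a palindrome. -/
theorem GroupPalindrome.hasSig {x : HNN A B φ} (h : GroupPalindrome A B φ x) :
    ∃ s, HasSig A B φ x s ∧ s.reverse = s := by
  obtain ⟨g0, l, hl, hx, hr⟩ := h
  have hs : HasSig A B φ x (l.map Prod.fst) := ⟨g0, l, hl, hx, rfl⟩
  refine ⟨_, hs, ?_⟩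
  obtain ⟨g0', l', h1, h2⟩ := revProd_eq_wordProd A B φ g0 l
  obtain ⟨s, h3, h4⟩ := exists_hasSig A B φ g0' l'
  rw [← h1, hr] at h3
  obtain rfl := hs.unique A B φ h3
  have e := congrArg List.length h2
  simp only [List.length_map, List.length_reverse] at e h4
  rcases h4 with h4 | h4
  · omega
  · rw [← h2, ← h4]

theorem Delta_eq (x : HNN A B φ) : Delta A B φ x = ((par (sqn A B φ x)).card : ℝ) := by
  rw [Delta, par, Finset.card_filter, Nat.cast_sum]
  refine Finset.sum_congr rfl fun k _ => ?_
  have : rk A B φ k x = ((if Odd (blockCount 1 k (sqn A B φ x) + blockCount (-1) k (sqn A B φ x))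
      then 1 else 0 : ℕ) : ℤ) := by
    simp only [rk, dk, pk, mk, Nat.odd_iff]
    split_ifs <;> omega
  rw [this, Int.cast_natCast]

/-- Each palindrome contributes at most `1`, each of the `k - 1` multiplications at most `6`. -/
theorem exists_hasSig_prod (ps : List (HNN A B φ)) (hne : ps ≠ [])
    (hps : ∀ p ∈ ps, GroupPalindrome A B φ p) :
    ∃ s, HasSig A B φ ps.prod s ∧ (par s).card + 6 ≤ 7 * ps.length := by
  induction ps with
  | nil => exact absurd rfl hne
  | cons p ps ih =>
    obtain ⟨s, hs, hrev⟩ := (hps p (by simp)).hasSig A B φ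
    have hcard := card_par_palindrome hrev
    by_cases hnil : ps = []
    · subst hnil
      exact ⟨s, by simpa using hs, by simp; omega⟩
    · obtain ⟨s', hs', hcard'⟩ := ih hnil fun q hq => hps q (by simp [hq])
      obtain ⟨u, w, v, rfl, rfl, h3⟩ := hs.mul A B φ hs'
      refine ⟨u ++ v, by simpa using h3, ?_⟩
      have := card_par_append_le u w v
      simp only [List.length_cons]
      omega

/-- If `g` is a product of `k ≥ 1` group-palindromes in the HNN extension, then
`Δ(g) ≤ 7k - 6`. -/
theorem hnn_delta_of_prod_of_group_palindromes
    {G : Type*} [Group G] (A B : Subgroup G) (φ : A ≃* B)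
    (k : ℕ) (hk : 1 ≤ k) (ps : List (HNN A B φ)) (hlen : ps.length = k)
    (hps : ∀ p ∈ ps, GroupPalindrome A B φ p) :
    Delta A B φ ps.prod ≤ 7 * (k : ℝ) - 6 := by
  subst hlen
  obtain ⟨s, hs, hcard⟩ := exists_hasSig_prod A B φ ps (List.length_pos_iff.1 hk) hps
  rw [Delta_eq, hs.sqn_eq A B φ]
  have : ((par s).card : ℝ) + 6 ≤ 7 * (ps.length : ℝ) := by exact_mod_cast hcard
  linarith

end PalHNN
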